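/- Multisymplectic conservation law for the semilinear vector (1-form) Hodge–Laplace problem in ℝ³: work on E := EuclideanSpace ℝ (Fin 3) and write ∂ᵢ f (x) := fderiv ℝ f x eᵢ for f differentiable at x; define curl, div, grad, the cross product ×₃, and scalar multiplication • as usual in coordinates ((curl F)ᵢ = ∂ⱼFₖ − ∂ₖFⱼ for cyclic (i,j,k), div F = ∑ᵢ ∂ᵢFᵢ, grad f = (∂₀f, ∂₁f, ∂₂f)). Let C : E → Matrix (Fin 3) (Fin 3) ℝ with C x symmetric, let v₁, v₂, η₁, η₂ : E → (Fin 3 → ℝ) and τ₁, τ₂ : E → ℝ, all with components differentiable at a point x, satisfying at x for i = 1, 2: − div vᵢ (x) = τᵢ x, curl vᵢ (x) = ηᵢ x, and grad τᵢ (x) + curl ηᵢ (x) = (C x).mulVec (vᵢ x). Then div (fun y => (τ₁ y) • (v₂ y) − (τ₂ y) • (v₁ y) + (v₁ y) ×₃ (η₂ y) − (v₂ y) ×₃ (η₁ y)) (x) = 0. -/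

import Mathlib

open Matrix

/-- The `i`-th partial derivative (along the `i`-th standard basis vector) of a
real-valued function on `ℝ³`. -/
noncomputable def pderiv3 (i : Fin 3) (f : EuclideanSpace ℝ (Fin 3) → ℝ)
    (x : EuclideanSpace ℝ (Fin 3)) : ℝ :=
  fderiv ℝ f x (EuclideanSpace.single i 1)

/-- The curl of a vector field on `ℝ³`: `(curl F)ᵢ = ∂ⱼFₖ − ∂ₖFⱼ` for `(i, j, k)` a
cyclic permutation of `(0, 1, 2)`. -/
noncomputable def curl3 (F : EuclideanSpace ℝ (Fin 3) → Fin 3 → ℝ)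
    (x : EuclideanSpace ℝ (Fin 3)) : Fin 3 → ℝ :=
  fun i => pderiv3 (i + 1) (fun y => F y (i + 2)) x - pderiv3 (i + 2) (fun y => F y (i + 1)) x

/-- The divergence of a vector field on `ℝ³`. -/
noncomputable def div3 (F : EuclideanSpace ℝ (Fin 3) → Fin 3 → ℝ)
    (x : EuclideanSpace ℝ (Fin 3)) : ℝ :=
  ∑ i, pderiv3 i (fun y => F y i) x

/-- The gradient of a scalar field on `ℝ³`. -/
noncomputable def grad3 (f : EuclideanSpace ℝ (Fin 3) → ℝ)
    (x : EuclideanSpace ℝ (Fin 3)) : Fin 3 → ℝ :=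
  fun i => pderiv3 i f x

theorem pderiv3_aux (i : Fin 3) (x : EuclideanSpace ℝ (Fin 3))
    {s t a b c d e f g h k l : EuclideanSpace ℝ (Fin 3) → ℝ}
    (hs : DifferentiableAt ℝ s x) (ht : DifferentiableAt ℝ t x)
    (ha : DifferentiableAt ℝ a x) (hb : DifferentiableAt ℝ b x)
    (hc : DifferentiableAt ℝ c x) (hd : DifferentiableAt ℝ d x)
    (he : DifferentiableAt ℝ e x) (hf : DifferentiableAt ℝ f x)
    (hg : DifferentiableAt ℝ g x) (hh : DifferentiableAt ℝ h x)
    (hk : DifferentiableAt ℝ k x) (hl : DifferentiableAt ℝ l x) :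
    pderiv3 i (fun y => s y * a y - t y * b y + (c y * d y - e y * f y)
      - (g y * h y - k y * l y)) x =
    (s x * pderiv3 i a x + a x * pderiv3 i s x) - (t x * pderiv3 i b x + b x * pderiv3 i t x)
    + ((c x * pderiv3 i d x + d x * pderiv3 i c x) - (e x * pderiv3 i f x + f x * pderiv3 i e x))
    - ((g x * pderiv3 i h x + h x * pderiv3 i g x)
      - (k x * pderiv3 i l x + l x * pderiv3 i k x)) := by
  have H := ((((hs.hasFDerivAt.mul ha.hasFDerivAt).sub (ht.hasFDerivAt.mul hb.hasFDerivAt)).add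
    ((hc.hasFDerivAt.mul hd.hasFDerivAt).sub (he.hasFDerivAt.mul hf.hasFDerivAt))).sub
    ((hg.hasFDerivAt.mul hh.hasFDerivAt).sub (hk.hasFDerivAt.mul hl.hasFDerivAt))).fderiv
  have H2 := congrArg (fun L => L (EuclideanSpace.single i (1 : ℝ))) H
  exact H2

/-- Multisymplectic conservation law for the semilinear vector (1-form) Hodge–Laplace
problem in `ℝ³`: first variations `wᵢ = (τᵢ, vᵢ, ηᵢ)` satisfying `−div vᵢ = τᵢ`,
`curl vᵢ = ηᵢ`, `grad τᵢ + curl ηᵢ = C v` with `C x` symmetric at a point `x` obey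
`div(τ₁ v₂ − τ₂ v₁ + v₁ × η₂ − v₂ × η₁) = 0` at `x`. -/
theorem vector_hodge_laplace_multisymplectic
    (C : EuclideanSpace ℝ (Fin 3) → Matrix (Fin 3) (Fin 3) ℝ)
    (hC : ∀ y, (C y).IsSymm)
    (v₁ v₂ η₁ η₂ : EuclideanSpace ℝ (Fin 3) → Fin 3 → ℝ)
    (τ₁ τ₂ : EuclideanSpace ℝ (Fin 3) → ℝ)
    (x : EuclideanSpace ℝ (Fin 3))
    (hdv₁ : ∀ i, DifferentiableAt ℝ (fun y => v₁ y i) x)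
    (hdv₂ : ∀ i, DifferentiableAt ℝ (fun y => v₂ y i) x)
    (hdη₁ : ∀ i, DifferentiableAt ℝ (fun y => η₁ y i) x)
    (hdη₂ : ∀ i, DifferentiableAt ℝ (fun y => η₂ y i) x)
    (hdτ₁ : DifferentiableAt ℝ τ₁ x)
    (hdτ₂ : DifferentiableAt ℝ τ₂ x)
    (hδ₁ : -div3 v₁ x = τ₁ x) (hδ₂ : -div3 v₂ x = τ₂ x)
    (hd₁ : curl3 v₁ x = η₁ x) (hd₂ : curl3 v₂ x = η₂ x)
    (heq₁ : grad3 τ₁ x + curl3 η₁ x = (C x).mulVec (v₁ x))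
    (heq₂ : grad3 τ₂ x + curl3 η₂ x = (C x).mulVec (v₂ x)) :
    div3 (fun y =>
      τ₁ y • v₂ y - τ₂ y • v₁ y
        + crossProduct (v₁ y) (η₂ y) - crossProduct (v₂ y) (η₁ y)) x = 0 := by
  have P0 := pderiv3_aux 0 x hdτ₁ hdτ₂ (hdv₂ 0) (hdv₁ 0) (hdv₁ 1) (hdη₂ 2) (hdv₁ 2) (hdη₂ 1)
    (hdv₂ 1) (hdη₁ 2) (hdv₂ 2) (hdη₁ 1)
  have P1 := pderiv3_aux 1 x hdτ₁ hdτ₂ (hdv₂ 1) (hdv₁ 1) (hdv₁ 2) (hdη₂ 0) (hdv₁ 0) (hdη₂ 2)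
    (hdv₂ 2) (hdη₁ 0) (hdv₂ 0) (hdη₁ 2)
  have P2 := pderiv3_aux 2 x hdτ₁ hdτ₂ (hdv₂ 2) (hdv₁ 2) (hdv₁ 0) (hdη₂ 1) (hdv₁ 1) (hdη₂ 0)
    (hdv₂ 0) (hdη₁ 1) (hdv₂ 1) (hdη₁ 0)
  have a1 : (0 : Fin 3) + 1 = 1 := rfl
  have a2 : (0 : Fin 3) + 2 = 2 := rfl
  have a3 : (1 : Fin 3) + 1 = 2 := rfl
  have a4 : (1 : Fin 3) + 2 = 0 := rfl
  have a5 : (2 : Fin 3) + 1 = 0 := rfl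
  have a6 : (2 : Fin 3) + 2 = 1 := rfl
  have S01 := (hC x).apply 0 1
  have S02 := (hC x).apply 0 2
  have S12 := (hC x).apply 1 2
  have A := fun i => congrFun hd₁ i
  have B := fun i => congrFun hd₂ i
  have D := fun i => congrFun heq₁ i
  have E := fun i => congrFun heq₂ i
  have A0 := A 0
  have A1 := A 1
  have A2 := A 2
  have B0 := B 0
  have B1 := B 1
  have B2 := B 2
  have D0 := D 0
  have D1 := D 1
  have D2 := D 2
  have E0 := E 0
  have E1 := E 1
  have E2 := E 2
  clear A B D E heq₁ heq₂ hd₁ hd₂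
  simp only [curl3, grad3, Pi.add_apply, Matrix.mulVec, dotProduct, Fin.sum_univ_three,
    a1, a2, a3, a4, a5, a6] at A0 A1 A2 B0 B1 B2 D0 D1 D2 E0 E1 E2
  simp only [div3, Fin.sum_univ_three] at hδ₁ hδ₂
  simp only [div3, Fin.sum_univ_three, cross_apply, Pi.add_apply, Pi.sub_apply, Pi.smul_apply,
    smul_eq_mul, Matrix.cons_val]
  rw [P0, P1, P2]
  linear_combination v₂ x 0 * D0 + v₂ x 1 * D1 + v₂ x 2 * D2
    - v₁ x 0 * E0 - v₁ x 1 * E1 - v₁ x 2 * E2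
    - τ₁ x * hδ₂ + τ₂ x * hδ₁
    + η₂ x 0 * A0 + η₂ x 1 * A1 + η₂ x 2 * A2
    - η₁ x 0 * B0 - η₁ x 1 * B1 - η₁ x 2 * B2
    + (v₁ x 0 * v₂ x 1 - v₁ x 1 * v₂ x 0) * S01
    + (v₁ x 0 * v₂ x 2 - v₁ x 2 * v₂ x 0) * S02
    + (v₁ x 1 * v₂ x 2 - v₁ x 2 * v₂ x 1) * S12
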